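/- arXiv:math/0406242 — 10 statements merged into one kernel-verified Lean document; each statement's English description precedes it below -/
import Mathlib

section
/- Let M be an element of SL₂(ℤ) with trace(M) > 2 (equivalently, M has two distinct eigenvalues in ℝ₊*). Then there exist an integer n ≥ 1, positive integers a₁, b₁, …, aₙ, bₙ, and A ∈ SL₂(ℤ) such that A·M·A⁻¹ = R^{a₁}·L^{b₁}·R^{a₂}·L^{b₂}·⋯·R^{aₙ}·L^{bₙ}. -/
/-- The standard transvection matrix `R = [[1,1],[0,1]]` in `SL₂(ℤ)`. -/
def Rmat : Matrix.SpecialLinearGroup (Fin 2) ℤ :=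
  ⟨!![1, 1; 0, 1], by simp [Matrix.det_fin_two_of]⟩

/-- The standard transvection matrix `L = [[1,0],[1,1]]` in `SL₂(ℤ)`. -/
def Lmat : Matrix.SpecialLinearGroup (Fin 2) ℤ :=
  ⟨!![1, 0; 1, 1], by simp [Matrix.det_fin_two_of]⟩

abbrev SLZ := Matrix.SpecialLinearGroup (Fin 2) ℤ

def mk4 (a b c d : ℤ) (h : a * d - b * c = 1) : SLZ :=
  ⟨!![a, b; c, d], by simpa [Matrix.det_fin_two_of] using h⟩

theorem mk4_coe (a b c d : ℤ) (h : a * d - b * c = 1) :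
    (mk4 a b c d h : Matrix (Fin 2) (Fin 2) ℤ) = !![a, b; c, d] := rfl

theorem R_coe : (Rmat : Matrix (Fin 2) (Fin 2) ℤ) = !![1, 1; 0, 1] := rfl

theorem L_coe : (Lmat : Matrix (Fin 2) (Fin 2) ℤ) = !![1, 0; 1, 1] := rfl

def bp (l : List (ℕ × ℕ)) : SLZ := (l.map fun p => Rmat ^ p.1 * Lmat ^ p.2).prod

def PosL (l : List (ℕ × ℕ)) : Prop := ∀ p ∈ l, 0 < p.1 ∧ 0 < p.2

def Good (M : SLZ) : Prop := ∃ l, l ≠ [] ∧ PosL l ∧ ∃ A : SLZ, A * M * A⁻¹ = bp l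

theorem Good.of_conj {M N : SLZ} (B : SLZ) (h : B * M = N * B) (hN : Good N) : Good M := by
  obtain ⟨l, h1, h2, A, hA⟩ := hN
  refine ⟨l, h1, h2, A * B, ?_⟩
  rw [← hA]
  have : N = B * M * B⁻¹ := by rw [h]; group
  rw [this]; group

theorem Lpow (j : ℕ) : Lmat ^ j = mk4 1 0 j 1 (by ring) := by
  induction j with
  | zero => ext i k; fin_cases i <;> fin_cases k <;> simp [mk4_coe]
  | succ n ih =>
    rw [pow_succ, ih]
    ext i k; fin_cases i <;> fin_cases k <;>
      simp [mk4_coe, R_coe, L_coe, Matrix.mul_apply, Fin.sum_univ_two] <;> ring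

theorem Rm_mul (a b c d : ℤ) (h : a * d - b * c = 1) (h' : (a - c) * d - (b - d) * c = 1) :
    mk4 a b c d h = Rmat * mk4 (a - c) (b - d) c d h' := by
  ext i k; fin_cases i <;> fin_cases k <;>
      simp [mk4_coe, R_coe, L_coe, Matrix.mul_apply, Fin.sum_univ_two] <;> ring

theorem Lm_mul (a b c d : ℤ) (h : a * d - b * c = 1) (h' : a * (d - b) - b * (c - a) = 1) :
    mk4 a b c d h = Lmat * mk4 a b (c - a) (d - b) h' := by
  ext i k; fin_cases i <;> fin_cases k <;>
      simp [mk4_coe, R_coe, L_coe, Matrix.mul_apply, Fin.sum_univ_two] <;> ring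

theorem claimA (n : ℕ) : ∀ (a b c d : ℤ) (h : a * d - b * c = 1), 0 < a → 0 ≤ b → 1 ≤ d → d ≤ c →
    a + c ≤ n → ∃ (j : ℕ) (l : List (ℕ × ℕ)), PosL l ∧ mk4 a b c d h = Lmat ^ j * bp l := by
  induction n with
  | zero => intro a b c d h ha hb hd hc hn; push_cast at hn; omega
  | succ n ih =>
    intro a b c d h ha hb hd hc hn
    push_cast at hn
    rcases hb.eq_or_lt with hb0 | hb0
    · subst hb0
      have had : a * d = 1 := by linarith
      have ha1 : a = 1 := by nlinarith
      have hd1 : d = 1 := by nlinarith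
      subst ha1 hd1
      refine ⟨c.toNat, [], by simp [PosL], ?_⟩
      rw [Lpow]
      have : ((c.toNat : ℕ) : ℤ) = c := Int.toNat_of_nonneg (by omega)
      simp [bp, this]
    · rcases lt_or_ge a c with hac | hac
      · have hab : b < a := by nlinarith
        have hbd : b < d := by nlinarith
        have hcd : d - b ≤ c - a := by
          by_contra hh
          push Not at hh
          have h3 : 1 ≤ (a - b) * (d - b) := by nlinarith
          nlinarith
        obtain ⟨j, l, hl, he⟩ := ih a b (c - a) (d - b) (by linarith) ha hb (by omega) hcd (by omega)
        refine ⟨j + 1, l, hl, ?_⟩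
        rw [Lm_mul a b c d h (by linarith), he, pow_succ', mul_assoc]
      · have hbd : d ≤ b := by
          by_contra hh
          push Not at hh
          nlinarith
        have hac' : c < a := by
          rcases hac.eq_or_lt with h1 | h1
          · subst h1; nlinarith
          · exact h1
        obtain ⟨j, l, hl, he⟩ := ih (a - c) (b - d) c d (by linarith) (by omega) (by omega) hd hc (by omega)
        rw [Rm_mul a b c d h (by linarith), he]
        rcases Nat.eq_zero_or_pos j with hj | hj
        · subst hj
          cases l with
          | nil =>
            exfalso
            have := congrArg (fun N : SLZ => (N : Matrix (Fin 2) (Fin 2) ℤ) 1 0) he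
            simp [mk4_coe, bp] at this
            omega
          | cons p l =>
            refine ⟨0, (p.1 + 1, p.2) :: l, ?_, ?_⟩
            · intro q hq
              rcases List.mem_cons.1 hq with rfl | hq
              · exact ⟨Nat.succ_pos _, (hl p (by simp)).2⟩
              · exact hl q (by simp [hq])
            · simp [bp, pow_succ', mul_assoc]
        · refine ⟨0, (1, j) :: l, ?_, ?_⟩
          · intro q hq
            rcases List.mem_cons.1 hq with rfl | hq
            · exact ⟨Nat.one_pos, hj⟩
            · exact hl q hq
          · simp [bp, mul_assoc]

theorem good1 (a b c d : ℤ) (h : a * d - b * c = 1) (ha : 0 < a) (hb : 0 < b) (hd : 1 ≤ d)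
    (hc : d ≤ c) : Good (mk4 a b c d h) := by
  obtain ⟨j, l, hl, he⟩ := claimA (a + c).toNat a b c d h ha hb.le hd hc (by omega)
  rcases List.eq_nil_or_concat l with h0 | ⟨l', p, h0⟩
  · exfalso
    subst h0
    rw [Lpow] at he
    have := congrArg (fun N : SLZ => (N : Matrix (Fin 2) (Fin 2) ℤ) 0 1) he
    simp [mk4_coe, bp] at this
    omega
  · subst h0
    refine ⟨l' ++ [(p.1, p.2 + j)], by simp, ?_, (Lmat ^ j)⁻¹, ?_⟩
    · intro q hq
      rcases List.mem_append.1 hq with hq | hq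
      · exact hl q (by simp [hq])
      · have := hl p (by simp)
        simp at hq
        subst hq
        exact ⟨this.1, by simp; omega⟩
    · rw [he]
      simp [bp, pow_add, mul_assoc]

theorem good2 (n : ℕ) : ∀ (a b c d : ℤ) (h : a * d - b * c = 1), 0 < a → 0 < b → 0 < c → 0 < d →
    d ≤ n → Good (mk4 a b c d h) := by
  induction n with
  | zero => intro a b c d h ha hb hc hd hn; push_cast at hn; omega
  | succ n ih =>
    intro a b c d h ha hb hc hd hn
    push_cast at hn
    rcases le_or_gt d c with hdc | hdc
    · exact good1 a b c d h ha hb hd hdc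
    · have hab : a ≤ b := by
        by_contra hh
        push Not at hh
        nlinarith
      refine Good.of_conj Rmat ?_ (ih (a + c) (b - a + d - c) c (d - c) (by linarith) (by omega)
        (by omega) hc (by omega) (by omega))
      ext i k; fin_cases i <;> fin_cases k <;>
        simp [mk4_coe, R_coe, L_coe, Matrix.mul_apply, Fin.sum_univ_two] <;> ring

theorem good3 (a b c d : ℤ) (h : a * d - b * c = 1) (ht : 2 < a + d) (hbc : 0 < b * c) :
    Good (mk4 a b c d h) := by
  have had : 0 < a * d := by linarith
  have had' : 0 < a ∧ 0 < d := by
    rcases mul_pos_iff.1 had with h1 | h1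
    · exact h1
    · omega
  rcases mul_pos_iff.1 hbc with h1 | h1
  · exact good2 d.toNat a b c d h had'.1 h1.1 h1.2 had'.2 (by omega)
  · refine Good.of_conj (mk4 0 (-1) 1 0 (by ring)) ?_ (good2 a.toNat d (-c) (-b) a (by linarith)
      had'.2 (by omega) (by omega) had'.1 (by omega))
    ext i k; fin_cases i <;> fin_cases k <;>
      simp [mk4_coe, R_coe, L_coe, Matrix.mul_apply, Fin.sum_univ_two] <;> ring

theorem abs_step (a d b n : ℤ) (hb : 0 < |b|) (h1 : 2 * |b| < |a - d|) (hn : |a - d| < n + 1)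
    (hs : ¬ |(a - b) - (d + b)| < n) : |(a + b) - (d - b)| < n := by
  rw [abs_lt] at *
  rcases abs_cases b with h | h <;> rcases abs_cases (a - d) with h' | h' <;> omega

theorem good4 (n : ℕ) : ∀ (a b c d : ℤ) (h : a * d - b * c = 1), 2 < a + d →
    |a - d| < n → Good (mk4 a b c d h) := by
  induction n with
  | zero => intro a b c d h ht hn; push_cast at hn; have := abs_nonneg (a - d); omega
  | succ n ih =>
    intro a b c d h ht hn
    push_cast at hn
    rcases lt_or_ge 0 (b * c) with hbc | hbc
    · exact good3 a b c d h ht hbc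
    have hb : b ≠ 0 := by
      rintro rfl
      have : a * d = 1 := by linarith
      rcases Int.eq_one_or_neg_one_of_mul_eq_one' this with h1 | h1 <;> omega
    have hc : c ≠ 0 := by
      rintro rfl
      have : a * d = 1 := by linarith
      rcases Int.eq_one_or_neg_one_of_mul_eq_one' this with h1 | h1 <;> omega
    have key : 4 * (|b| * |c|) < |a - d| * |a - d| := by
      rw [← abs_mul, abs_mul_abs_self, abs_of_nonpos hbc]
      nlinarith
    have hbp := abs_pos.2 hb
    have hcp := abs_pos.2 hc
    have hx := abs_nonneg (a - d)
    have hor : 2 * |b| < |a - d| ∨ 2 * |c| < |a - d| := by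
      by_contra hh
      push Not at hh
      nlinarith [mul_le_mul hh.1 hh.2 hx (by positivity)]
    have cR : Good (mk4 (a + c) (b - a + d - c) c (d - c) (by linarith)) → Good (mk4 a b c d h) := by
      refine Good.of_conj Rmat ?_
      ext i k; fin_cases i <;> fin_cases k <;>
        simp [mk4_coe, R_coe, L_coe, Matrix.mul_apply, Fin.sum_univ_two] <;> ring
    have cR' : Good (mk4 (a - c) (b + a - d - c) c (d + c) (by linarith)) → Good (mk4 a b c d h) := by
      refine Good.of_conj (mk4 1 (-1) 0 1 (by ring)) ?_
      ext i k; fin_cases i <;> fin_cases k <;>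
        simp [mk4_coe, R_coe, L_coe, Matrix.mul_apply, Fin.sum_univ_two] <;> ring
    have cL : Good (mk4 (a - b) b (c + a - d - b) (d + b) (by linarith)) → Good (mk4 a b c d h) := by
      refine Good.of_conj Lmat ?_
      ext i k; fin_cases i <;> fin_cases k <;>
        simp [mk4_coe, R_coe, L_coe, Matrix.mul_apply, Fin.sum_univ_two] <;> ring
    have cL' : Good (mk4 (a + b) b (c - a + d - b) (d - b) (by linarith)) → Good (mk4 a b c d h) := by
      refine Good.of_conj (mk4 1 0 (-1) 1 (by ring)) ?_
      ext i k; fin_cases i <;> fin_cases k <;>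
        simp [mk4_coe, R_coe, L_coe, Matrix.mul_apply, Fin.sum_univ_two] <;> ring
    rcases hor with h1 | h1
    · by_cases hs : |(a - b) - (d + b)| < n
      · exact cL (ih _ _ _ _ _ (by linarith) hs)
      · exact cL' (ih _ _ _ _ _ (by linarith) (abs_step a d b n hbp h1 hn hs))
    · by_cases hs : |(a - c) - (d + c)| < n
      · exact cR' (ih _ _ _ _ _ (by linarith) hs)
      · exact cR (ih _ _ _ _ _ (by linarith) (abs_step a d c n hcp h1 hn hs))

/-- Any element of `SL₂(ℤ)` with trace `> 2` is conjugate to a product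
`R^{a₁} L^{b₁} ⋯ R^{aₙ} L^{bₙ}` with `n ≥ 1` and all `aᵢ, bᵢ` positive. -/
theorem conjugate_to_positive_word (M : Matrix.SpecialLinearGroup (Fin 2) ℤ)
    (hM : 2 < Matrix.trace (M : Matrix (Fin 2) (Fin 2) ℤ)) :
    ∃ (n : ℕ), 1 ≤ n ∧ ∃ (a b : Fin n → ℕ),
      (∀ i, 0 < a i) ∧ (∀ i, 0 < b i) ∧
      ∃ A : Matrix.SpecialLinearGroup (Fin 2) ℤ,
        A * M * A⁻¹ = (List.ofFn fun i : Fin n => Rmat ^ a i * Lmat ^ b i).prod := by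
  have hdet := M.det_coe
  rw [Matrix.det_fin_two] at hdet
  rw [Matrix.trace_fin_two] at hM
  have hg := good4 (|M 0 0 - M 1 1| + 1).toNat (M 0 0) (M 0 1) (M 1 0) (M 1 1) hdet hM (by
    have := abs_nonneg (M 0 0 - M 1 1)
    omega)
  have hMe : mk4 (M 0 0) (M 0 1) (M 1 0) (M 1 1) hdet = M := by
    ext i k; fin_cases i <;> fin_cases k <;> simp [mk4_coe]
  rw [hMe] at hg
  obtain ⟨l, h1, h2, A, hA⟩ := hg
  refine ⟨l.length, List.length_pos_iff.2 h1, fun i => (l.get i).1, fun i => (l.get i).2,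
    fun i => (h2 _ (List.get_mem l i)).1, fun i => (h2 _ (List.get_mem l i)).2, A, ?_⟩
  rw [hA, bp]
  congr 1
  conv_lhs => rw [← List.ofFn_get l, List.map_ofFn]
  rfl
end

section
/- Suppose n, p ≥ 1 and a₁,b₁,…,aₙ,bₙ and c₁,d₁,…,c_p,d_p are positive integers such that the products R^{a₁}L^{b₁}⋯R^{aₙ}L^{bₙ} and R^{c₁}L^{d₁}⋯R^{c_p}L^{d_p} are conjugate in SL₂(ℤ). Then n = p and the two sequences of pairs agree up to cyclic permutation: there exists k ∈ ℤ/nℤ such that a_i = c_{i+k} and b_i = d_{i+k} for all i ∈ ℤ/nℤ (indices taken modulo n). -/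
namespace PW

abbrev SL := Matrix.SpecialLinearGroup (Fin 2) ℤ

def Pos (M : SL) : Prop := 0 < M 0 0 ∧ 0 < M 0 1 ∧ 0 < M 1 0 ∧ 0 < M 1 1
def NN (M : SL) : Prop := 0 ≤ M 0 0 ∧ 0 ≤ M 0 1 ∧ 0 ≤ M 1 0 ∧ 0 ≤ M 1 1

lemma det2 (M : SL) : M 0 0 * M 1 1 - M 0 1 * M 1 0 = 1 := by
  have := M.2
  rwa [Matrix.det_fin_two] at this

lemma mulE (M N : SL) (i j : Fin 2) : (M * N) i j = M i 0 * N 0 j + M i 1 * N 1 j := by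
  rw [Matrix.SpecialLinearGroup.coe_mul, Matrix.mul_apply, Fin.sum_univ_two]

lemma ext2 {M N : SL} (h00 : M 0 0 = N 0 0) (h01 : M 0 1 = N 0 1) (h10 : M 1 0 = N 1 0)
    (h11 : M 1 1 = N 1 1) : M = N := by
  ext i j
  fin_cases i <;> fin_cases j <;> assumption

lemma R00 : Rmat 0 0 = 1 := rfl
lemma R01 : Rmat 0 1 = 1 := rfl
lemma R10 : Rmat 1 0 = 0 := rfl
lemma R11 : Rmat 1 1 = 1 := rfl
lemma L00 : Lmat 0 0 = 1 := rfl
lemma L01 : Lmat 0 1 = 0 := rfl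
lemma L10 : Lmat 1 0 = 1 := rfl
lemma L11 : Lmat 1 1 = 1 := rfl
lemma I00 : (1 : SL) 0 0 = 1 := rfl
lemma I01 : (1 : SL) 0 1 = 0 := rfl
lemma I10 : (1 : SL) 1 0 = 0 := rfl
lemma I11 : (1 : SL) 1 1 = 1 := rfl

lemma Pos.mul {M N : SL} (hM : Pos M) (hN : Pos N) : Pos (M * N) := by
  obtain ⟨a, b, c, d⟩ := hM
  obtain ⟨e, f, g, h⟩ := hN
  refine ⟨?_, ?_, ?_, ?_⟩ <;> rw [mulE] <;> positivity

/-- descent for row vectors -/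
lemma descent (p q r s : ℤ) (hp : 0 < p) (hq : 0 < q) (hr : 0 < r) (hs : 0 < s)
    (hdet : p * s - q * r = 1) (u v : ℕ → ℤ) (h0 : ¬ (u 0 = 0 ∧ v 0 = 0))
    (hu : ∀ k, u (k+1) = u k * p + v k * r) (hv : ∀ k, v (k+1) = u k * q + v k * s) :
    ∃ K, ∀ k, K ≤ k → (0 < u k ∧ 0 < v k) ∨ (u k < 0 ∧ v k < 0) := by
  have stay : ∀ k, ((0 < u k ∧ 0 < v k) ∨ (u k < 0 ∧ v k < 0)) →
      ((0 < u (k+1) ∧ 0 < v (k+1)) ∨ (u (k+1) < 0 ∧ v (k+1) < 0)) := by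
    intro k hk
    rw [hu, hv]
    rcases hk with ⟨h1, h2⟩ | ⟨h1, h2⟩
    · left; constructor <;> positivity
    · right; constructor <;> nlinarith
  suffices h : ∃ K, (0 < u K ∧ 0 < v K) ∨ (u K < 0 ∧ v K < 0) by
    obtain ⟨K, hK⟩ := h
    refine ⟨K, fun k hk => ?_⟩
    induction k, hk using Nat.le_induction with
    | base => exact hK
    | succ k _ ih => exact stay k ih
  by_contra hcon
  push Not at hcon
  have inv1 : ∀ k, u k = u (k+1) * s - v (k+1) * r := by
    intro k; rw [hu, hv]; linear_combination (-(u k)) * hdet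
  have inv2 : ∀ k, v k = v (k+1) * p - u (k+1) * q := by
    intro k; rw [hu, hv]; linear_combination (-(v k)) * hdet
  have nz : ∀ k, ¬ (u k = 0 ∧ v k = 0) := by
    intro k
    induction k with
    | zero => exact h0
    | succ k ih =>
      rintro ⟨h1, h2⟩
      apply ih
      rw [inv1 k, inv2 k, h1, h2]; simp
  have mixed : ∀ k, (0 < u k ∧ v k < 0) ∨ (u k < 0 ∧ 0 < v k) := by
    intro k
    have h1 := hcon k
    have h2 := hcon (k+1)
    have h3 := nz k
    rw [hu, hv] at h2
    rcases lt_trichotomy (u k) 0 with h | h | h <;> rcases lt_trichotomy (v k) 0 with h' | h' | h'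
    · exact absurd h' (not_lt.2 (h1.2 h))
    · rw [h'] at h2
      have := h2.2 (by nlinarith)
      nlinarith
    · right; exact ⟨h, h'⟩
    · rw [h] at h2
      have := h2.2 (by nlinarith)
      nlinarith
    · exact absurd ⟨h, h'⟩ h3
    · rw [h] at h2
      have := h2.1 (by nlinarith)
      nlinarith
    · left; exact ⟨h, h'⟩
    · rw [h'] at h2
      have := h2.1 (by nlinarith)
      nlinarith
    · exact absurd h' (not_lt.2 (h1.1 h))
  have dec : ∀ k, |u (k+1)| + 1 ≤ |u k| := by
    intro k
    have e1 := inv1 k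
    have e2 := inv2 k
    rcases mixed (k+1) with ⟨h1, h2⟩ | ⟨h1, h2⟩
    · rw [abs_of_pos h1]
      have : u (k+1) + 1 ≤ u k := by nlinarith
      exact this.trans (le_abs_self _)
    · rw [abs_of_neg h1]
      have : - u (k+1) + 1 ≤ - u k := by nlinarith
      exact this.trans (neg_le_abs _)
  have : ∀ k : ℕ, |u k| + k ≤ |u 0| := by
    intro k
    induction k with
    | zero => simp
    | succ k ih => have := dec k; push_cast; linarith
  have h := this (|u 0|.toNat + 1)
  have h' := abs_nonneg (u (|u 0|.toNat + 1))
  have h'' := abs_nonneg (u 0)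
  omega

lemma exists_pos {A M M' : SL} (hM : Pos M) (hM' : Pos M') (h : A * M = M' * A) :
    ∃ B : SL, Pos B ∧ B * M = M' * B := by
  have hk : ∀ k : ℕ, A * M ^ k = M' ^ k * A := fun k =>
    (show SemiconjBy A M M' from h).pow_right k
  have dA := det2 A
  have row : ∀ i : Fin 2, ∃ K, ∀ k, K ≤ k → (0 < (A * M ^ k) i 0 ∧ 0 < (A * M ^ k) i 1) ∨
      ((A * M ^ k) i 0 < 0 ∧ (A * M ^ k) i 1 < 0) := by
    intro i
    refine descent (M 0 0) (M 0 1) (M 1 0) (M 1 1) hM.1 hM.2.1 hM.2.2.1 hM.2.2.2 (det2 M)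
      (fun k => (A * M ^ k) i 0) (fun k => (A * M ^ k) i 1) ?_ ?_ ?_
    · simp only [pow_zero, mul_one]
      rintro ⟨h1, h2⟩
      fin_cases i
      · change A 0 0 = 0 at h1; change A 0 1 = 0 at h2; rw [h1, h2] at dA; simp at dA
      · change A 1 0 = 0 at h1; change A 1 1 = 0 at h2; rw [h1, h2] at dA; simp at dA
    · intro k; simp only [pow_succ, ← mul_assoc]; rw [mulE _ M]
    · intro k; simp only [pow_succ, ← mul_assoc]; rw [mulE _ M]
  have col : ∀ i : Fin 2, ∃ K, ∀ k, K ≤ k → (0 < (A * M ^ k) 0 i ∧ 0 < (A * M ^ k) 1 i) ∨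
      ((A * M ^ k) 0 i < 0 ∧ (A * M ^ k) 1 i < 0) := by
    intro i
    simp only [hk]
    refine descent (M' 0 0) (M' 1 0) (M' 0 1) (M' 1 1) hM'.1 hM'.2.2.1 hM'.2.1 hM'.2.2.2
      (by linarith [det2 M', mul_comm (M' 0 1) (M' 1 0)])
      (fun k => (M' ^ k * A) 0 i) (fun k => (M' ^ k * A) 1 i) ?_ ?_ ?_
    · simp only [pow_zero, one_mul]
      rintro ⟨h1, h2⟩
      fin_cases i
      · change A 0 0 = 0 at h1; change A 1 0 = 0 at h2; rw [h1, h2] at dA; simp at dA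
      · change A 0 1 = 0 at h1; change A 1 1 = 0 at h2; rw [h1, h2] at dA; simp at dA
    · intro k; simp only [pow_succ', mul_assoc]; rw [mulE M']; ring
    · intro k; simp only [pow_succ', mul_assoc]; rw [mulE M']; ring
  obtain ⟨K0, h0⟩ := row 0
  obtain ⟨K1, h1⟩ := row 1
  obtain ⟨K2, h2⟩ := col 0
  have g0 := h0 (K0 + K1 + K2) (by omega)
  have g1 := h1 (K0 + K1 + K2) (by omega)
  have g2 := h2 (K0 + K1 + K2) (by omega)
  have hB : (A * M ^ (K0 + K1 + K2)) * M = M' * (A * M ^ (K0 + K1 + K2)) := by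
    rw [mul_assoc, ← pow_succ, pow_succ', ← mul_assoc, h, mul_assoc]
  generalize A * M ^ (K0 + K1 + K2) = B at *
  by_cases hpos : 0 < B 0 0
  · exact ⟨B, by unfold Pos; omega, hB⟩
  · refine ⟨-B, ?_, by rw [neg_mul, mul_neg, hB]⟩
    unfold Pos
    simp only [Matrix.SpecialLinearGroup.coe_neg, Matrix.neg_apply]
    omega

def letter : Bool → SL
  | true => Rmat
  | false => Lmat

def W (u : List Bool) : SL := (u.map letter).prod

lemma W_append (u v : List Bool) : W (u ++ v) = W u * W v := by simp [W]
lemma W_cons (x : Bool) (v : List Bool) : W (x :: v) = letter x * W v := by simp [W]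
lemma W_nil : W [] = 1 := by simp [W]

lemma NN_W (u : List Bool) : NN (W u) := by
  induction u with
  | nil => rw [W_nil]; simp [NN, I00, I01, I10, I11]
  | cons x u ih =>
    obtain ⟨a, b, c, d⟩ := ih
    rw [W_cons]
    cases x <;> simp only [NN, letter, mulE, R00, R01, R10, R11, L00, L01, L10, L11] <;>
      refine ⟨?_, ?_, ?_, ?_⟩ <;> linarith

lemma exists_word (N : ℕ) : ∀ M : SL, NN M → M 0 0 + M 0 1 + M 1 0 + M 1 1 ≤ N →
    ∃ u, W u = M := by
  induction N with
  | zero =>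
    rintro M ⟨a, b, c, d⟩ h
    exfalso
    have := det2 M
    have h1 : M 0 0 = 0 := by push_cast at h; linarith
    have h2 : M 0 1 = 0 := by push_cast at h; linarith
    rw [h1, h2] at this; simp at this
  | succ N ih =>
    rintro M ⟨a, b, c, d⟩ h
    have hd := det2 M
    push_cast at h
    by_cases h1 : M 1 0 ≤ M 0 0 ∧ M 1 1 ≤ M 0 1
    · have hcd : 0 < M 1 0 + M 1 1 := by
        by_contra hh
        have e1 : M 1 0 = 0 := by linarith
        have e2 : M 1 1 = 0 := by linarith
        rw [e1, e2] at hd; simp at hd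
      let X : SL := ⟨!![M 0 0 - M 1 0, M 0 1 - M 1 1; M 1 0, M 1 1], by
        rw [Matrix.det_fin_two_of]; linarith⟩
      have x00 : X 0 0 = M 0 0 - M 1 0 := rfl
      have x01 : X 0 1 = M 0 1 - M 1 1 := rfl
      have x10 : X 1 0 = M 1 0 := rfl
      have x11 : X 1 1 = M 1 1 := rfl
      obtain ⟨u, hu⟩ := ih X ⟨by linarith, by linarith, by linarith, by linarith⟩ (by linarith)
      refine ⟨true :: u, ?_⟩
      rw [W_cons, hu]
      apply ext2 <;> simp only [letter, mulE, R00, R01, R10, R11, x00, x01, x10, x11] <;> ring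
    by_cases h2 : M 0 0 ≤ M 1 0 ∧ M 0 1 ≤ M 1 1
    · have hcd : 0 < M 0 0 + M 0 1 := by
        by_contra hh
        have e1 : M 0 0 = 0 := by linarith
        have e2 : M 0 1 = 0 := by linarith
        rw [e1, e2] at hd; simp at hd
      let X : SL := ⟨!![M 0 0, M 0 1; M 1 0 - M 0 0, M 1 1 - M 0 1], by
        rw [Matrix.det_fin_two_of]; linarith⟩
      have x00 : X 0 0 = M 0 0 := rfl
      have x01 : X 0 1 = M 0 1 := rfl
      have x10 : X 1 0 = M 1 0 - M 0 0 := rfl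
      have x11 : X 1 1 = M 1 1 - M 0 1 := rfl
      obtain ⟨u, hu⟩ := ih X ⟨by linarith, by linarith, by linarith, by linarith⟩ (by linarith)
      refine ⟨false :: u, ?_⟩
      rw [W_cons, hu]
      apply ext2 <;> simp only [letter, mulE, L00, L01, L10, L11, x00, x01, x10, x11] <;> ring
    refine ⟨[], ?_⟩
    rw [W_nil]
    by_cases h3 : M 1 0 < M 0 0
    · have h4 : M 0 1 < M 1 1 := by omega
      have e1 : M 0 1 = 0 := by nlinarith
      have e2 : M 1 0 = 0 := by nlinarith
      rw [e1, e2] at hd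
      have e3 : M 0 0 = 1 := by nlinarith
      have e4 : M 1 1 = 1 := by nlinarith
      apply ext2 <;> simp only [I00, I01, I10, I11, e1, e2, e3, e4]
    · exfalso
      have h4 : M 1 1 < M 0 1 := by omega
      have h5 : M 0 0 < M 1 0 := by omega
      nlinarith

lemma cons_ne_nil' (x : Bool) (u : List Bool) : W (x :: u) ≠ 1 := by
  intro h
  obtain ⟨a, b, c, d⟩ := NN_W u
  rw [W_cons] at h
  have h00 := congrArg (fun M : SL => M 0 0) h
  have h01 := congrArg (fun M : SL => M 0 1) h
  have h10 := congrArg (fun M : SL => M 1 0) h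
  have h11 := congrArg (fun M : SL => M 1 1) h
  cases x <;> simp only [letter, mulE, R00, R01, R10, R11, L00, L01, L10, L11, I00, I01, I10, I11]
    at h00 h01 h10 h11 <;> linarith

lemma true_ne_false (u v : List Bool) : W (true :: u) ≠ W (false :: v) := by
  intro h
  obtain ⟨a, b, c, d⟩ := NN_W u
  obtain ⟨a', b', c', d'⟩ := NN_W v
  have hd := det2 (W u)
  rw [W_cons, W_cons] at h
  have h00 := congrArg (fun M : SL => M 0 0) h
  have h01 := congrArg (fun M : SL => M 0 1) h
  have h10 := congrArg (fun M : SL => M 1 0) h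
  have h11 := congrArg (fun M : SL => M 1 1) h
  simp only [letter, mulE, R00, R01, R10, R11, L00, L01, L10, L11] at h00 h01 h10 h11
  have e1 : (W u) 0 0 = 0 := by linarith
  have e2 : (W u) 0 1 = 0 := by linarith
  rw [e1, e2] at hd; simp at hd

lemma W_inj : ∀ u v : List Bool, W u = W v → u = v
  | [], [], _ => rfl
  | [], y :: v, h => absurd h.symm (by rw [W_nil]; exact cons_ne_nil' y v)
  | x :: u, [], h => absurd h (by rw [W_nil]; exact cons_ne_nil' x u)
  | true :: u, true :: v, h => by
    rw [W_cons, W_cons] at h; rw [W_inj u v (mul_left_cancel h)]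
  | false :: u, false :: v, h => by
    rw [W_cons, W_cons] at h; rw [W_inj u v (mul_left_cancel h)]
  | true :: u, false :: v, h => absurd h (true_ne_false u v)
  | false :: u, true :: v, h => absurd h.symm (true_ne_false v u)

def f : List (ℕ × ℕ) → List Bool
  | [] => []
  | x :: l => List.replicate x.1 true ++ (List.replicate x.2 false ++ f l)

def P (l : List (ℕ × ℕ)) : Prop := ∀ x ∈ l, 0 < x.1 ∧ 0 < x.2

def blk (x : ℕ × ℕ) : SL := Rmat ^ x.1 * Lmat ^ x.2

lemma f_append (l m : List (ℕ × ℕ)) : f (l ++ m) = f l ++ f m := by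
  induction l with
  | nil => rfl
  | cons x l ih => simp [f, ih]

lemma W_f (l : List (ℕ × ℕ)) : W (f l) = (l.map blk).prod := by
  induction l with
  | nil => simp [f, W]
  | cons x l ih =>
    rw [f, W_append, W_append, ih]
    simp [W, blk, letter, mul_assoc]

lemma rep_inj {x : Bool} : ∀ {m n : ℕ} {X Y : List Bool}, X.head? ≠ some x → Y.head? ≠ some x →
    List.replicate m x ++ X = List.replicate n x ++ Y → m = n ∧ X = Y
  | 0, 0, X, Y, _, _, h => ⟨rfl, by simpa using h⟩
  | 0, n+1, X, Y, hX, _, h => by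
    exfalso; apply hX; rw [show X = _ from h]; simp [List.replicate_succ]
  | m+1, 0, X, Y, _, hY, h => by
    exfalso; apply hY; rw [← show _ = Y from h]; simp [List.replicate_succ]
  | m+1, n+1, X, Y, hX, hY, h => by
    simp only [List.replicate_succ, List.cons_append, List.cons.injEq, true_and] at h
    obtain ⟨h1, h2⟩ := rep_inj hX hY h
    exact ⟨by rw [h1], h2⟩

lemma head_f {l : List (ℕ × ℕ)} (h : P l) : (f l).head? ≠ some false := by
  cases l with
  | nil => simp [f]
  | cons x l =>
    have := (h x (by simp)).1
    obtain ⟨k, hk⟩ := Nat.exists_eq_succ_of_ne_zero this.ne'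
    simp [f, hk, List.replicate_succ]

lemma head_g {b : ℕ} (hb : 0 < b) (X : List Bool) :
    (List.replicate b false ++ X).head? ≠ some true := by
  obtain ⟨k, hk⟩ := Nat.exists_eq_succ_of_ne_zero hb.ne'
  simp [hk, List.replicate_succ]

lemma f_ne_nil {x : ℕ × ℕ} {l : List (ℕ × ℕ)} (h : P (x :: l)) : f (x :: l) ≠ [] := by
  have := (h x (by simp)).1
  obtain ⟨k, hk⟩ := Nat.exists_eq_succ_of_ne_zero this.ne'
  simp [f, hk, List.replicate_succ]

lemma f_inj : ∀ {l m : List (ℕ × ℕ)}, P l → P m → f l = f m → l = m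
  | [], [], _, _, _ => rfl
  | [], y :: m, _, hm, h => absurd h.symm (f_ne_nil hm)
  | x :: l, [], hl, _, h => absurd h (f_ne_nil hl)
  | x :: l, y :: m, hl, hm, h => by
    have hx := hl x (by simp)
    have hy := hm y (by simp)
    have hl' : P l := fun z hz => hl z (by simp [hz])
    have hm' : P m := fun z hz => hm z (by simp [hz])
    obtain ⟨h1, h2⟩ := rep_inj (head_g hx.2 _) (head_g hy.2 _) h
    obtain ⟨h3, h4⟩ := rep_inj (head_f hl') (head_f hm') h2
    rw [f_inj hl' hm' h4, Prod.ext h1 h3]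

lemma f_surj (u : List Bool) : ∃ (b : ℕ) (l : List (ℕ × ℕ)), P l ∧
    u ++ [false] = List.replicate b false ++ f l := by
  induction u with
  | nil => exact ⟨1, [], by simp [P], by simp [f]⟩
  | cons x u ih =>
    obtain ⟨b, l, hl, h⟩ := ih
    cases x with
    | false => exact ⟨b+1, l, hl, by simp [List.replicate_succ, h]⟩
    | true =>
      rcases Nat.eq_zero_or_pos b with rfl | hb
      · cases l with
        | nil => simp [f] at h
        | cons y l =>
          refine ⟨0, (y.1 + 1, y.2) :: l, ?_, ?_⟩
          · intro z hz
            rcases List.mem_cons.1 hz with rfl | hz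
            · exact ⟨by simp, (hl y (by simp)).2⟩
            · exact hl z (by simp [hz])
          · rw [List.cons_append, h]; simp [f, List.replicate_succ]
      · refine ⟨0, (1, b) :: l, ?_, ?_⟩
        · intro z hz
          rcases List.mem_cons.1 hz with rfl | hz
          · exact ⟨by simp, hb⟩
          · exact hl z (by simp [hz])
        · rw [List.cons_append, h]; simp [f]

lemma Rpow (k : ℕ) : (Rmat ^ k) 0 0 = 1 ∧ (Rmat ^ k) 0 1 = k ∧ (Rmat ^ k) 1 0 = 0 ∧
    (Rmat ^ k) 1 1 = 1 := by
  induction k with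
  | zero => simp
  | succ k ih =>
    obtain ⟨a, b, c, d⟩ := ih
    rw [pow_succ]
    simp only [mulE, R00, R01, R10, R11, a, b, c, d]
    push_cast
    refine ⟨?_, ?_, ?_, ?_⟩ <;> first | trivial | ring

lemma Lpow (k : ℕ) : (Lmat ^ k) 0 0 = 1 ∧ (Lmat ^ k) 0 1 = 0 ∧ (Lmat ^ k) 1 0 = k ∧
    (Lmat ^ k) 1 1 = 1 := by
  induction k with
  | zero => simp
  | succ k ih =>
    obtain ⟨a, b, c, d⟩ := ih
    rw [pow_succ]
    simp only [mulE, L00, L01, L10, L11, a, b, c, d]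
    push_cast
    refine ⟨?_, ?_, ?_, ?_⟩ <;> first | trivial | ring

lemma Pos_blk {x : ℕ × ℕ} (h : 0 < x.1 ∧ 0 < x.2) : Pos (blk x) := by
  obtain ⟨a, b, c, d⟩ := Rpow x.1
  obtain ⟨a', b', c', d'⟩ := Lpow x.2
  obtain ⟨h1, h2⟩ := h
  unfold blk Pos
  simp only [mulE, a, b, c, d, a', b', c', d']
  refine ⟨?_, ?_, ?_, ?_⟩ <;> simp <;> positivity

lemma Pos_prod : ∀ {l : List (ℕ × ℕ)}, l ≠ [] → P l → Pos (l.map blk).prod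
  | [], h, _ => absurd rfl h
  | [x], _, h => by simpa using Pos_blk (h x (by simp))
  | x :: y :: l, _, h => by
    rw [List.map_cons, List.prod_cons]
    exact (Pos_blk (h x (by simp))).mul
      (Pos_prod (l := y :: l) (by simp) (fun z hz => h z (List.mem_cons_of_mem _ hz)))

lemma conj_word {α : Type*} (N : ℕ) : ∀ V X Y : List α, V.length ≤ N → Y ≠ [] →
    V ++ X = Y ++ V → Y ~r X := by
  induction N with
  | zero =>
    intro V X Y hV _ h
    obtain rfl : V = [] := by simpa using hV
    simp at h; rw [h]
  | succ N ih =>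
    intro V X Y hV hY h
    rcases List.append_eq_append_iff.1 h with ⟨U, h1, h2⟩ | ⟨U, h1, h2⟩
    · rw [h1, h2]; exact List.isRotated_append
    · apply ih U X Y _ hY
      · rw [← h2, h1]
      · have := List.length_pos_iff.2 hY
        rw [h1, List.length_append] at hV
        omega

lemma f_head_true {l : List (ℕ × ℕ)} (hl : l ≠ []) (h : P l) : ∃ u, f l = true :: u := by
  cases l with
  | nil => exact absurd rfl hl
  | cons x l =>
    obtain ⟨k, hk⟩ := Nat.exists_eq_succ_of_ne_zero (h x (by simp)).1.ne'
    exact ⟨_, by simp only [f, hk, List.replicate_succ, List.cons_append]; rfl⟩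

lemma f_last_false {l : List (ℕ × ℕ)} (hl : l ≠ []) (h : P l) : ∃ u, f l = u ++ [false] := by
  obtain ⟨l', x, rfl⟩ := List.eq_nil_or_concat' l |>.resolve_left hl
  obtain ⟨k, hk⟩ := Nat.exists_eq_succ_of_ne_zero (h x (by simp)).2.ne'
  refine ⟨f l' ++ (List.replicate x.1 true ++ List.replicate k false), ?_⟩
  simp [f_append, f, hk, List.replicate_succ']

lemma main {A : SL} {X Y : List (ℕ × ℕ)} (hX : X ≠ []) (hY : Y ≠ []) (pX : P X) (pY : P Y)
    (h : A * (X.map blk).prod = (Y.map blk).prod * A) : Y ~r X := by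
  obtain ⟨B, hB, hBM⟩ := exists_pos (Pos_prod hX pX) (Pos_prod hY pY) h
  obtain ⟨v, rfl⟩ := exists_word (B 0 0 + B 0 1 + B 1 0 + B 1 1).toNat B
    ⟨hB.1.le, hB.2.1.le, hB.2.2.1.le, hB.2.2.2.le⟩ (by
      rw [Int.toNat_of_nonneg]; obtain ⟨_, _, _, _⟩ := hB; positivity)
  rw [← W_f, ← W_f, ← W_append, ← W_append] at hBM
  have e := W_inj _ _ hBM
  obtain ⟨s, hs⟩ := f_head_true hY pY
  obtain ⟨t, ht⟩ := f_last_false hX pX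
  obtain ⟨b, V, pV, hV⟩ := f_surj (v ++ t)
  rw [List.append_assoc, ← ht] at hV
  have hb : b = 0 := by
    rcases Nat.eq_zero_or_pos b with hb | hb
    · exact hb
    · exfalso
      apply head_g hb (f V)
      rw [← hV, e, hs]; simp
  subst hb
  simp only [List.replicate_zero, List.nil_append] at hV
  apply conj_word V.length V X Y le_rfl hY
  apply f_inj
  · intro z hz; rcases List.mem_append.1 hz with hz | hz
    · exact pV z hz
    · exact pX z hz
  · intro z hz; rcases List.mem_append.1 hz with hz | hz
    · exact pY z hz
    · exact pV z hz
  · rw [f_append, f_append, ← hV, e, List.append_assoc, e]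

end PW

/-- If two positive words `R^{a₁}L^{b₁}⋯R^{aₙ}L^{bₙ}` and `R^{c₁}L^{d₁}⋯R^{c_p}L^{d_p}`
are conjugate in `SL₂(ℤ)`, then `n = p` and the sequences of exponent pairs agree up to a
cyclic permutation. -/
theorem positive_word_unique_up_to_cyclic_permutation
    (n p : ℕ) (hn : 1 ≤ n) (hp : 1 ≤ p)
    (a b : ZMod n → ℕ) (c d : ZMod p → ℕ)
    (ha : ∀ i, 0 < a i) (hb : ∀ i, 0 < b i)
    (hc : ∀ i, 0 < c i) (hd : ∀ i, 0 < d i)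
    (hconj : ∃ A : Matrix.SpecialLinearGroup (Fin 2) ℤ,
      A * (List.ofFn fun i : Fin n =>
            Rmat ^ a ((i : ℕ) : ZMod n) * Lmat ^ b ((i : ℕ) : ZMod n)).prod * A⁻¹
        = (List.ofFn fun i : Fin p =>
            Rmat ^ c ((i : ℕ) : ZMod p) * Lmat ^ d ((i : ℕ) : ZMod p)).prod) :
    ∃ _ : n = p, ∃ k : ZMod n, ∀ i : ZMod n,
      a i = c (((i + k).val : ZMod p)) ∧ b i = d (((i + k).val : ZMod p)) := by
  obtain ⟨A, hA⟩ := hconj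
  have hA' := mul_inv_eq_iff_eq_mul.1 hA
  have key := PW.main (A := A)
    (X := List.ofFn fun i : Fin n => (a ((i : ℕ) : ZMod n), b ((i : ℕ) : ZMod n)))
    (Y := List.ofFn fun i : Fin p => (c ((i : ℕ) : ZMod p), d ((i : ℕ) : ZMod p)))
    (by intro h; have := congrArg List.length h; simp at this; omega)
    (by intro h; have := congrArg List.length h; simp at this; omega)
    (by intro z hz; obtain ⟨i, rfl⟩ := List.mem_ofFn.1 hz; exact ⟨ha _, hb _⟩)
    (by intro z hz; obtain ⟨i, rfl⟩ := List.mem_ofFn.1 hz; exact ⟨hc _, hd _⟩)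
    (by rw [List.map_ofFn, List.map_ofFn]; exact hA')
  obtain ⟨k, hk⟩ := key
  have hlen : n = p := by
    have := congrArg List.length hk
    simpa using this.symm
  subst hlen
  refine ⟨rfl, (k : ZMod n), fun i => ?_⟩
  have : NeZero n := ⟨by omega⟩
  have hi := ZMod.val_lt i
  have h1 := List.getElem_of_eq hk.symm (i := i.val) (by simpa using hi)
  rw [List.getElem_rotate] at h1
  simp only [List.getElem_ofFn, List.length_ofFn, Prod.mk.injEq, ZMod.natCast_mod, Nat.cast_add,
    ZMod.natCast_val, ZMod.cast_id', id] at h1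
  simpa using h1
end

section
/- For every n ≥ 1 and all positive integers a₁, b₁, …, aₙ, bₙ, the product M = R^{a₁}·L^{b₁}·R^{a₂}·L^{b₂}·⋯·R^{aₙ}·L^{bₙ} in SL₂(ℤ) satisfies trace(M) > 2; consequently M has two distinct eigenvalues in ℝ₊*. -/
lemma Rmat_pow_coe (k : ℕ) :
    ((Rmat ^ k : Matrix.SpecialLinearGroup (Fin 2) ℤ) : Matrix (Fin 2) (Fin 2) ℤ)
      = !![1, (k : ℤ); 0, 1] := by
  induction k with
  | zero => ext i j; fin_cases i <;> fin_cases j <;> simp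
  | succ k ih =>
    rw [pow_succ, Matrix.SpecialLinearGroup.coe_mul, ih]
    ext i j
    fin_cases i <;> fin_cases j <;> simp [Rmat, Matrix.mul_apply, Fin.sum_univ_two, add_comm]

lemma Lmat_pow_coe (k : ℕ) :
    ((Lmat ^ k : Matrix.SpecialLinearGroup (Fin 2) ℤ) : Matrix (Fin 2) (Fin 2) ℤ)
      = !![1, 0; (k : ℤ), 1] := by
  induction k with
  | zero => ext i j; fin_cases i <;> fin_cases j <;> simp
  | succ k ih =>
    rw [pow_succ, Matrix.SpecialLinearGroup.coe_mul, ih]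
    ext i j
    fin_cases i <;> fin_cases j <;> simp [Lmat, Matrix.mul_apply, Fin.sum_univ_two, add_comm]

/-- Entrywise lower bounds satisfied by nonempty positive words. -/
def PosWord (M : Matrix.SpecialLinearGroup (Fin 2) ℤ) : Prop :=
  2 ≤ M.1 0 0 ∧ 1 ≤ M.1 0 1 ∧ 1 ≤ M.1 1 0 ∧ 1 ≤ M.1 1 1

lemma posWord_block (a b : ℕ) (ha : 0 < a) (hb : 0 < b) : PosWord (Rmat ^ a * Lmat ^ b) := by
  have h : (Rmat ^ a * Lmat ^ b).1 = !![1, (a : ℤ); 0, 1] * !![1, 0; (b : ℤ), 1] := by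
    rw [← Rmat_pow_coe, ← Lmat_pow_coe]; rfl
  have ha' : (1 : ℤ) ≤ a := by exact_mod_cast ha
  have hb' : (1 : ℤ) ≤ b := by exact_mod_cast hb
  unfold PosWord
  rw [h]
  simp only [Matrix.mul_apply, Fin.sum_univ_two, Matrix.of_apply, Matrix.cons_val', Matrix.cons_val_zero,
    Matrix.cons_val_one, Matrix.cons_val_fin_one]
  refine ⟨?_, ?_, ?_, ?_⟩ <;> nlinarith

lemma weak_prod (l : List (Matrix.SpecialLinearGroup (Fin 2) ℤ)) (h : ∀ M ∈ l, PosWord M) :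
    (1 ≤ l.prod.1 0 0 ∧ 0 ≤ l.prod.1 0 1 ∧ 0 ≤ l.prod.1 1 0 ∧ 1 ≤ l.prod.1 1 1) ∧
      (l ≠ [] → PosWord l.prod) := by
  induction l with
  | nil => simp
  | cons M l ih =>
    obtain ⟨⟨q1, q2, q3, q4⟩, -⟩ := ih (fun N hN => h N (List.mem_cons_of_mem _ hN))
    obtain ⟨p1, p2, p3, p4⟩ := h M List.mem_cons_self
    have key : PosWord (M :: l).prod := by
      have e : (M :: l).prod.1 = M.1 * l.prod.1 := by rw [List.prod_cons]; rfl
      unfold PosWord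
      rw [e]
      simp only [Matrix.mul_apply, Fin.sum_univ_two]
      refine ⟨?_, ?_, ?_, ?_⟩ <;> nlinarith
    refine ⟨?_, fun _ => key⟩
    obtain ⟨k1, k2, k3, k4⟩ := key
    exact ⟨by linarith, by linarith, by linarith, by linarith⟩

/-- Any nonempty product `R^{a₁}L^{b₁}⋯R^{aₙ}L^{bₙ}` of positive powers of the standard
transvection matrices has trace `> 2` (hence two distinct eigenvalues in `ℝ₊*`). -/
theorem trace_of_positive_word_gt_two (n : ℕ) (hn : 1 ≤ n) (a b : Fin n → ℕ)
    (ha : ∀ i, 0 < a i) (hb : ∀ i, 0 < b i) :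
    2 < Matrix.trace
      (((List.ofFn fun i : Fin n => Rmat ^ a i * Lmat ^ b i).prod :
        Matrix.SpecialLinearGroup (Fin 2) ℤ) : Matrix (Fin 2) (Fin 2) ℤ) := by
  have h := (weak_prod (List.ofFn fun i : Fin n => Rmat ^ a i * Lmat ^ b i) (by
    intro M hM
    obtain ⟨i, rfl⟩ := (List.mem_ofFn' _ _).1 hM
    exact posWord_block _ _ (ha i) (hb i))).2 (by
      intro h0
      have := congrArg List.length h0
      simp at this
      omega)
  obtain ⟨h1, -, -, h4⟩ := h
  rw [Matrix.trace_fin_two]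
  linarith
end

section
/- The function 𝒱 is continuous on the closed simplex S = {(x,y,z) ∈ ℝ³ : x ≥ 0, y ≥ 0, z ≥ 0, x + y + z = π}, and 𝒱(x,y,z) = 0 for every point of S at which at least one of the coordinates x, y, z vanishes. -/
/-- The Lobachevsky-type integral `∫₀ˣ log(2 sin u) du`. -/
noncomputable def lob (x : ℝ) : ℝ := ∫ u in (0:ℝ)..x, Real.log (2 * Real.sin u)

/-- The volume `𝒱(x,y,z)` of the ideal hyperbolic tetrahedron with dihedral angles
`x, y, z`. -/
noncomputable def idealVol (p : ℝ × ℝ × ℝ) : ℝ := -lob p.1 - lob p.2.1 - lob p.2.2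

/-- The closed simplex of nonnegative angle triples summing to `π`. -/
def angleSimplex : Set (ℝ × ℝ × ℝ) :=
  {p | 0 ≤ p.1 ∧ 0 ≤ p.2.1 ∧ 0 ≤ p.2.2 ∧ p.1 + p.2.1 + p.2.2 = Real.pi}

theorem aux_int (a b : ℝ) :
    IntervalIntegrable (fun u => Real.log (2 * Real.sin u)) MeasureTheory.volume a b := by
  have h : MeromorphicOn (fun u : ℝ => 2 * Real.sin u) (Set.uIcc a b) := by
    have : AnalyticOnNhd ℝ (fun u : ℝ => 2 * Real.sin u) (Set.uIcc a b) :=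
      fun x _ => by fun_prop
    exact this.meromorphicOn
  exact h.intervalIntegrable_log

theorem aux_cont : Continuous lob :=
  intervalIntegral.continuous_primitive aux_int 0

theorem aux_pi : lob Real.pi = 0 := by
  unfold lob
  have h : ∫ u in (0:ℝ)..Real.pi, Real.log (2 * Real.sin u)
      = ∫ u in (0:ℝ)..Real.pi, (Real.log 2 + Real.log (Real.sin u)) := by
    rw [intervalIntegral.integral_of_le Real.pi_pos.le,
      intervalIntegral.integral_of_le Real.pi_pos.le,
      MeasureTheory.integral_Ioc_eq_integral_Ioo, MeasureTheory.integral_Ioc_eq_integral_Ioo]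
    refine MeasureTheory.setIntegral_congr_fun measurableSet_Ioo fun u hu => ?_
    exact Real.log_mul two_ne_zero (Real.sin_pos_of_mem_Ioo hu).ne'
  have hi : IntervalIntegrable (fun u => Real.log (Real.sin u)) MeasureTheory.volume 0 Real.pi :=
    intervalIntegrable_log_sin
  rw [h, intervalIntegral.integral_add (by simp) hi,
    integral_log_sin_zero_pi]
  simp
  ring

theorem aux_symm (x : ℝ) : lob x + lob (Real.pi - x) = 0 := by
  have h := intervalIntegral.integral_comp_sub_left (a := x) (b := Real.pi)
    (fun u => Real.log (2 * Real.sin u)) Real.pi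
  simp only [Real.sin_pi_sub, sub_self] at h
  have h2 := intervalIntegral.integral_add_adjacent_intervals (aux_int 0 x) (aux_int x Real.pi)
  have h3 := aux_pi
  unfold lob at *
  linarith

theorem aux_zero : lob 0 = 0 := by simp [lob]

/-- `𝒱` is continuous on the closed angle simplex and vanishes at every point of the
simplex where one of the coordinates is zero. -/
theorem idealVol_continuousOn_and_zero_on_boundary :
    ContinuousOn idealVol angleSimplex ∧
    ∀ p ∈ angleSimplex, (p.1 = 0 ∨ p.2.1 = 0 ∨ p.2.2 = 0) → idealVol p = 0 := by
  constructor
  · have h := aux_cont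
    unfold idealVol
    exact Continuous.continuousOn (by fun_prop)
  · rintro ⟨x, y, z⟩ ⟨-, -, -, hs⟩ h
    simp only [idealVol] at *
    have h0 := aux_zero
    rcases h with h | h | h
    · have e : z = Real.pi - y := by linarith
      have := aux_symm y
      rw [h, e]; linarith
    · have e : z = Real.pi - x := by linarith
      have := aux_symm x
      rw [h, e]; linarith
    · have e : y = Real.pi - x := by linarith
      have := aux_symm x
      rw [h, e]; linarith
end

section
/- Let γ : ℝ → ℝ³, γ(t) = (x_t, y_t, z_t), be differentiable at t₀ with derivative (X, Y, Z), where X + Y + Z = 0, the coordinates x_{t₀}, y_{t₀}, z_{t₀} all lie in (0, π), and x_t + y_t + z_t = π for all t. Then the function t ↦ 𝒱(x_t, y_t, z_t) has derivative at t₀ equal to −(X·log(sin x_{t₀}) + Y·log(sin y_{t₀}) + Z·log(sin z_{t₀})); equivalently, exp(−(d/dt)𝒱(x_t,y_t,z_t)|_{t=t₀}) = (sin x_{t₀})^X · (sin y_{t₀})^Y · (sin z_{t₀})^Z, where the exponents are real powers. -/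
theorem lob_hasDerivAt {a : ℝ} (ha : a ∈ Set.Ioo 0 Real.pi) :
    HasDerivAt lob (Real.log 2 + Real.log (Real.sin a)) a := by
  have hs : 0 < Real.sin a := Real.sin_pos_of_mem_Ioo ha
  rw [← Real.log_mul two_ne_zero hs.ne']
  unfold lob
  refine intervalIntegral.integral_hasDerivAt_right ?_ ?_ ?_
  · apply MeromorphicOn.intervalIntegrable_log (f := fun u => 2 * Real.sin u)
    intro u _
    apply AnalyticAt.meromorphicAt
    fun_prop
  · apply Measurable.stronglyMeasurable _ |>.stronglyMeasurableAtFilter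
    fun_prop
  · apply ContinuousAt.log
    · fun_prop
    · positivity

/-- Along a path of angle triples `(x_t, y_t, z_t)` with `x_t + y_t + z_t = π`,
differentiable at `t₀` with derivative `(X, Y, Z)` (so `X + Y + Z = 0`), and with all
angles at `t₀` in `(0, π)`, the volume `t ↦ 𝒱(x_t,y_t,z_t)` has derivative
`−(X log sin x_{t₀} + Y log sin y_{t₀} + Z log sin z_{t₀})` at `t₀`; equivalently the
exponential of the negative of this derivative is `sin^X x_{t₀} sin^Y y_{t₀} sin^Z z_{t₀}`. -/
theorem hasDerivAt_idealVol (x y z : ℝ → ℝ) (t₀ X Y Z : ℝ)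
    (hx : HasDerivAt x X t₀) (hy : HasDerivAt y Y t₀) (hz : HasDerivAt z Z t₀)
    (hXYZ : X + Y + Z = 0)
    (hx0 : x t₀ ∈ Set.Ioo 0 Real.pi) (hy0 : y t₀ ∈ Set.Ioo 0 Real.pi)
    (hz0 : z t₀ ∈ Set.Ioo 0 Real.pi)
    (hsum : ∀ t, x t + y t + z t = Real.pi) :
    HasDerivAt (fun t => idealVol (x t, y t, z t))
      (-(X * Real.log (Real.sin (x t₀)) + Y * Real.log (Real.sin (y t₀)) +
          Z * Real.log (Real.sin (z t₀)))) t₀ ∧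
    Real.exp (-(-(X * Real.log (Real.sin (x t₀)) + Y * Real.log (Real.sin (y t₀)) +
          Z * Real.log (Real.sin (z t₀))))) =
      Real.sin (x t₀) ^ X * Real.sin (y t₀) ^ Y * Real.sin (z t₀) ^ Z := by
  have hsx : 0 < Real.sin (x t₀) := Real.sin_pos_of_mem_Ioo hx0
  have hsy : 0 < Real.sin (y t₀) := Real.sin_pos_of_mem_Ioo hy0
  have hsz : 0 < Real.sin (z t₀) := Real.sin_pos_of_mem_Ioo hz0
  constructor
  · have h := (((lob_hasDerivAt hx0).comp t₀ hx).neg.sub ((lob_hasDerivAt hy0).comp t₀ hy)).sub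
      ((lob_hasDerivAt hz0).comp t₀ hz)
    refine HasDerivAt.congr_deriv (f := fun t => idealVol (x t, y t, z t)) h ?_
    linear_combination (-Real.log 2) * hXYZ
  · rw [Real.rpow_def_of_pos hsx, Real.rpow_def_of_pos hsy, Real.rpow_def_of_pos hsz,
      ← Real.exp_add, ← Real.exp_add]
    congr 1
    ring
end

section
/- Let x, y, z be real numbers with x > 0, y > 0, z > 0 and x + y + z = π, and let X, Y, Z be real numbers with X + Y + Z = 0. Then X²·(cos x / sin x) + Y²·(cos y / sin y) + Z²·(cos z / sin z) ≥ 0. (This quadratic form is the negative of the second derivative of the ideal-tetrahedron volume along an affine path of angles, and its nonnegativity is the computational core of the concavity of the volume.) -/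
/-- For angles `x, y, z` of a Euclidean triangle (positive, summing to `π`) and reals
`X, Y, Z` with `X + Y + Z = 0`, the quadratic form
`X² cot x + Y² cot y + Z² cot z` is nonnegative.  This is the computational core of the
concavity of the ideal-tetrahedron volume. -/
theorem cot_quadratic_form_nonneg (x y z X Y Z : ℝ)
    (hx : 0 < x) (hy : 0 < y) (hz : 0 < z) (hsum : x + y + z = Real.pi)
    (hXYZ : X + Y + Z = 0) :
    0 ≤ X ^ 2 * (Real.cos x / Real.sin x) + Y ^ 2 * (Real.cos y / Real.sin y) +
        Z ^ 2 * (Real.cos z / Real.sin z) := by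
  have sx : 0 < Real.sin x := Real.sin_pos_of_pos_of_lt_pi hx (by linarith)
  have sy : 0 < Real.sin y := Real.sin_pos_of_pos_of_lt_pi hy (by linarith)
  have sz : 0 < Real.sin z := Real.sin_pos_of_pos_of_lt_pi hz (by linarith)
  have ez : z = Real.pi - (x + y) := by linarith
  have e1 : Real.sin z = Real.sin x * Real.cos y + Real.cos x * Real.sin y := by
    rw [ez, Real.sin_pi_sub, Real.sin_add]
  have e2 : Real.cos z = Real.sin x * Real.sin y - Real.cos x * Real.cos y := by
    rw [ez, Real.cos_pi_sub, Real.cos_add]; ring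
  have hab : Real.cos x / Real.sin x + Real.cos y / Real.sin y
      = Real.sin z / (Real.sin x * Real.sin y) := by
    rw [e1]; field_simp; ring
  have hpos : 0 < Real.cos x / Real.sin x + Real.cos y / Real.sin y := by
    rw [hab]; positivity
  have h1 : (Real.cos x / Real.sin x) * (Real.cos y / Real.sin y)
      + (Real.cos z / Real.sin z) *
        (Real.cos x / Real.sin x + Real.cos y / Real.sin y) = 1 := by
    rw [hab]; field_simp; rw [e2]; ring
  generalize Real.cos x / Real.sin x = a at *
  generalize Real.cos y / Real.sin y = b at *
  generalize Real.cos z / Real.sin z = c at *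
  have hY : Y = -X - Z := by linarith
  have key : (a + b) * (X ^ 2 * a + Y ^ 2 * b + Z ^ 2 * c)
      = ((a + b) * X + b * Z) ^ 2 + Z ^ 2 := by
    rw [hY]; linear_combination Z ^ 2 * h1
  exact nonneg_of_mul_nonneg_right (by rw [key]; positivity) hpos
end

section
/- Let U and V be positive real constants and define f : (−1,1) → ℝ by f(λ) := ((1−λ²)/4) · U · ( ((1+λ)/(1−λ)) · V )^λ (real power of a positive real). Then f attains the absolute minimum value U / ((1+V)(1+V⁻¹)) on (−1,1): for every λ ∈ (−1,1), f(λ) ≥ U/((1+V)(1+V⁻¹)), with equality at λ₀ = (1−V)/(1+V) (the unique λ with ((1+λ)/(1−λ))·V = 1). -/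
/-- For positive constants `U, V`, the function
`f(λ) = ((1−λ²)/4) · U · (((1+λ)/(1−λ)) · V)^λ` on `(−1,1)` attains the absolute minimum
value `U / ((1+V)(1+V⁻¹))`, at the unique point `λ₀ = (1−V)/(1+V)` where
`((1+λ)/(1−λ)) · V = 1`. -/
theorem min_of_degenerate_derivative_function (U V : ℝ) (hU : 0 < U) (hV : 0 < V) :
    (∀ l ∈ Set.Ioo (-1 : ℝ) 1,
      U / ((1 + V) * (1 + V⁻¹)) ≤ (1 - l ^ 2) / 4 * U * ((1 + l) / (1 - l) * V) ^ l) ∧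
    (1 - V) / (1 + V) ∈ Set.Ioo (-1 : ℝ) 1 ∧
    (1 - ((1 - V) / (1 + V)) ^ 2) / 4 * U *
        ((1 + (1 - V) / (1 + V)) / (1 - (1 - V) / (1 + V)) * V) ^ ((1 - V) / (1 + V)) =
      U / ((1 + V) * (1 + V⁻¹)) := by
  have hV1 : 0 < 1 + V := by linarith
  have hC : U / ((1 + V) * (1 + V⁻¹)) = U * (V / (1 + V) ^ 2) := by
    field_simp
    try ring
  rw [hC]
  refine ⟨?_, ⟨?_, ?_⟩, ?_⟩
  · rintro l ⟨h1, h2⟩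
    have hp : 0 < 1 + l := by linarith
    have hq : 0 < 1 - l := by linarith
    have hlog : Real.log (V / (1 + V) ^ 2) ≤
        Real.log ((1 - l ^ 2) / 4 * ((1 + l) / (1 - l) * V) ^ l) := by
      have e1 : (1 - l ^ 2) / 4 = ((1 + l) / 2) * ((1 - l) / 2) := by ring
      have e2 : (1 + l) / (1 - l) * V = ((1 + l) / 2) / ((1 - l) / 2) * V := by
        field_simp
      rw [e1, e2]
      obtain ⟨p, hpd⟩ : ∃ p, p = (1 + l) / 2 := ⟨_, rfl⟩
      obtain ⟨q, hqd⟩ : ∃ q, q = (1 - l) / 2 := ⟨_, rfl⟩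
      rw [← hpd, ← hqd]
      have hp0 : 0 < p := by linarith
      have hq0 : 0 < q := by linarith
      have hl : l = 2 * p - 1 := by linarith
      have hqp : q = 1 - p := by linarith
      have k1 := Real.log_le_sub_one_of_pos (x := 1 / (1 + V) / p) (by positivity)
      have k2 := Real.log_le_sub_one_of_pos (x := V / (1 + V) / q) (by positivity)
      rw [Real.log_div (by positivity) (by positivity),
        Real.log_div (by positivity) (by positivity)] at k1 k2
      rw [Real.log_one] at k1
      have k1' := mul_le_mul_of_nonneg_left k1 hp0.le
      have k2' := mul_le_mul_of_nonneg_left k2 hq0.le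
      have m1 : p * (1 / (1 + V) / p - 1) = 1 / (1 + V) - p := by field_simp
      have m2 : q * (V / (1 + V) / q - 1) = V / (1 + V) - q := by field_simp
      have m3 : 1 / (1 + V) + V / (1 + V) = 1 := by field_simp
      rw [m1] at k1'
      rw [m2] at k2'
      rw [Real.log_div (by positivity) (by positivity), Real.log_pow,
        Real.log_mul (by positivity) (by positivity),
        Real.log_mul (by positivity) (by positivity),
        Real.log_rpow (by positivity),
        Real.log_mul (by positivity) (by positivity),
        Real.log_div (by positivity) (by positivity)]
      push_cast
      have k3 := add_le_add k1' k2'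
      have m4 : 1 / (1 + V) - p + (V / (1 + V) - q) = 0 := by linarith
      rw [m4] at k3
      generalize Real.log q = Q at *
      subst hqp
      rw [hl]
      linarith
    have hpos : 0 < (1 - l ^ 2) / 4 := by nlinarith
    have h3 := (Real.log_le_log_iff (by positivity) (by positivity)).1 hlog
    calc U * (V / (1 + V) ^ 2) ≤ U * ((1 - l ^ 2) / 4 * ((1 + l) / (1 - l) * V) ^ l) :=
          mul_le_mul_of_nonneg_left h3 hU.le
      _ = _ := by ring
  · rw [lt_div_iff₀ hV1]; linarith
  · rw [div_lt_one hV1]; linarith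
  · have e : (1 + (1 - V) / (1 + V)) / (1 - (1 - V) / (1 + V)) * V = 1 := by
      have a1 : 1 + (1 - V) / (1 + V) = 2 / (1 + V) := by field_simp; ring
      have a2 : 1 - (1 - V) / (1 + V) = 2 * V / (1 + V) := by field_simp; ring
      rw [a1, a2]
      field_simp
    rw [e, Real.one_rpow]
    field_simp
    ring
end

section
/- Fix m ≥ 1 and a nonconstant cyclic word Ω : ℤ/mℤ → Bool, with hinge indices i defined by Ω(i−1) ≠ Ω(i). Let P ⊆ (ℤ/mℤ → ℝ) be the set of all w satisfying: (range) 0 < w(i) < π/2 for all i; (concavity) w(i−1) + w(i+1) < 2·w(i) at every nonhinge index i; (hinge) |w(i+1) − w(i−1)| < w(i) at every hinge index i. Then P is an open, convex, bounded, and nonempty subset of ℝ^m. -/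
open Real

/-- `i` is a hinge index iff the letters (`false` = `L`, `true` = `R`) just before and
just after layer `i` differ. -/
def IsHinge {m : ℕ} (Ω : ZMod m → Bool) (i : ZMod m) : Prop := Ω (i - 1) ≠ Ω i

/-- The open polytope `P` of angle structures: range, concavity and hinge conditions
with strict inequalities. -/
def Ppoly (m : ℕ) (Ω : ZMod m → Bool) : Set (ZMod m → ℝ) :=
  {w | (∀ i, 0 < w i ∧ w i < π / 2) ∧
       (∀ i, ¬IsHinge Ω i → w (i - 1) + w (i + 1) < 2 * w i) ∧
       (∀ i, IsHinge Ω i → |w (i + 1) - w (i - 1)| < w i)}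

theorem exists_dist_aux {m : ℕ} (H : ZMod m → Prop) (e : ZMod m)
    (h : ∀ i, ∃ n : ℕ, H (i + n * e)) :
    ∃ a : ZMod m → ℕ, ∀ i, (H i → a i = 0) ∧ (¬ H i → a i = a (i + e) + 1) := by
  classical
  refine ⟨fun i => Nat.find (h i), fun i => ⟨fun hi => ?_, fun hi => ?_⟩⟩
  · simpa [Nat.find_eq_zero] using hi
  · have h2 : ∃ n : ℕ, H (i + (n + 1 : ℕ) * e) := by
      obtain ⟨n, hn⟩ := h (i + e)
      refine ⟨n, ?_⟩
      convert hn using 1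
      push_cast; ring
    have := Nat.find_comp_succ (h i) h2 (by simpa using hi)
    simp only
    rw [this]
    congr 1
    apply Nat.find_congr'
    intro n
    have : i + ((n + 1 : ℕ) : ZMod m) * e = i + e + n * e := by push_cast; ring
    rw [this]

theorem exists_hinge_aux {m : ℕ} [NeZero m] (Ω : ZMod m → Bool)
    (hΩ : ∃ i j, Ω i ≠ Ω j) : ∃ i, IsHinge Ω i := by
  by_contra hc
  simp only [IsHinge, not_exists, not_not] at hc
  have h0 : ∀ n : ℕ, Ω (n : ZMod m) = Ω 0 := by
    intro n
    induction n with
    | zero => simp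
    | succ k ih =>
      have := hc ((k + 1 : ℕ) : ZMod m)
      rw [← this, ← ih]
      congr 1
      push_cast; ring
  obtain ⟨i, j, hij⟩ := hΩ
  apply hij
  have hi := h0 i.val
  have hj := h0 j.val
  rw [ZMod.natCast_zmod_val] at hi hj
  rw [hi, hj]

theorem Ppoly_nonempty_aux (m : ℕ) [NeZero m] (Ω : ZMod m → Bool)
    (hΩ : ∃ i j, Ω i ≠ Ω j) : (Ppoly m Ω).Nonempty := by
  obtain ⟨j, hj⟩ := exists_hinge_aux Ω hΩ
  obtain ⟨a, ha⟩ := exists_dist_aux (IsHinge Ω) (-1) (fun i => ⟨(i - j).val, by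
    rw [ZMod.natCast_zmod_val]; convert hj using 1; ring⟩)
  obtain ⟨b, hb⟩ := exists_dist_aux (IsHinge Ω) 1 (fun i => ⟨(j - i).val, by
    rw [ZMod.natCast_zmod_val]; convert hj using 1; ring⟩)
  set f : ZMod m → ℝ := fun i => (a i : ℝ) * b i with hf
  have hf0 : ∀ i, 0 ≤ f i := fun i => by positivity
  set M : ℝ := ∑ i, f i with hM
  have hM0 : 0 ≤ M := Finset.sum_nonneg fun i _ => hf0 i
  have hfM : ∀ i, f i ≤ M := fun i =>
    Finset.single_le_sum (fun i _ => hf0 i) (Finset.mem_univ i)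
  have hfh : ∀ i, IsHinge Ω i → f i = 0 := fun i hi => by simp [hf, (ha i).1 hi]
  have hfc : ∀ i, ¬ IsHinge Ω i → f (i - 1) + f (i + 1) = 2 * f i - 2 := by
    intro i hi
    have h1 := (ha i).2 hi
    have h2 := (hb i).2 hi
    rw [← sub_eq_add_neg] at h1
    have e1 : f (i - 1) = ((a i : ℝ) - 1) * (b i + 1) := by
      by_cases h : IsHinge Ω (i - 1)
      · rw [hfh _ h, h1, (ha _).1 h]; simp
      · have := (hb _).2 h
        rw [sub_add_cancel] at this
        simp only [hf]
        rw [this, h1]; push_cast; ring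
    have e2 : f (i + 1) = ((a i : ℝ) + 1) * (b i - 1) := by
      by_cases h : IsHinge Ω (i + 1)
      · rw [hfh _ h, h2, (hb _).1 h]; simp
      · have := (ha _).2 h
        rw [add_neg_cancel_right] at this
        simp only [hf]
        rw [this, h2]; push_cast; ring
    rw [e1, e2]; simp only [hf]; ring
  obtain ⟨ε, hε, hεM⟩ : ∃ ε : ℝ, 0 < ε ∧ ε * M ≤ 1 / 2 := by
    refine ⟨1 / (2 * (M + 1)), by positivity, ?_⟩
    rw [div_mul_eq_mul_div, div_le_div_iff₀ (by positivity) (by norm_num)]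
    linarith
  have hlo : ∀ i, 0 ≤ ε * f i := fun i => mul_nonneg hε.le (hf0 i)
  have hhi : ∀ i, ε * f i ≤ 1 / 2 := fun i =>
    (mul_le_mul_of_nonneg_left (hfM i) hε.le).trans hεM
  refine ⟨fun i => 1 + ε * f i, fun i => ⟨?_, ?_⟩, fun i hi => ?_, fun i hi => ?_⟩
  · linarith [hlo i]
  · linarith [hhi i, Real.pi_gt_d2]
  · have := hfc i hi
    simp only
    nlinarith
  · simp only
    rw [abs_lt]
    constructor <;> linarith [hlo i, hlo (i+1), hlo (i-1), hhi (i+1), hhi (i-1)]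

/-- For a nonconstant cyclic word `Ω`, the polytope `P` of angle structures is an open,
convex, bounded and nonempty subset of `ℝ^m`. -/
theorem Ppoly_isOpen_convex_bounded_nonempty (m : ℕ) [NeZero m] (Ω : ZMod m → Bool)
    (hΩ : ∃ i j, Ω i ≠ Ω j) :
    IsOpen (Ppoly m Ω) ∧ Convex ℝ (Ppoly m Ω) ∧
      Bornology.IsBounded (Ppoly m Ω) ∧ (Ppoly m Ω).Nonempty := by
  refine ⟨?_, ?_, ?_, Ppoly_nonempty_aux m Ω hΩ⟩
  · have : Ppoly m Ω = (⋂ i, {w | 0 < w i ∧ w i < π / 2}) ∩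
        ((⋂ i, {w | ¬IsHinge Ω i → w (i - 1) + w (i + 1) < 2 * w i}) ∩
        (⋂ i, {w | IsHinge Ω i → |w (i + 1) - w (i - 1)| < w i})) := by
      ext w; simp [Ppoly]
    rw [this]
    refine (isOpen_iInter_of_finite fun i => ?_).inter
      ((isOpen_iInter_of_finite fun i => ?_).inter (isOpen_iInter_of_finite fun i => ?_))
    · exact (isOpen_lt continuous_const (continuous_apply i)).inter
        (isOpen_lt (continuous_apply i) continuous_const)
    · by_cases h : IsHinge Ω i
      · simp [h]
      · simp only [h, not_false_eq_true, forall_const]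
        exact isOpen_lt (by fun_prop) (by fun_prop)
    · by_cases h : IsHinge Ω i
      · simp only [h, forall_const]
        exact isOpen_lt (by fun_prop) (by fun_prop)
      · simp [h]
  · rw [convex_iff_forall_pos]
    intro x hx y hy s t hs ht hst
    obtain ⟨hx1, hx2, hx3⟩ := hx
    obtain ⟨hy1, hy2, hy3⟩ := hy
    refine ⟨fun i => ⟨?_, ?_⟩, fun i hi => ?_, fun i hi => ?_⟩
    · have := mul_pos hs (hx1 i).1
      have := mul_pos ht (hy1 i).1
      simp only [Pi.add_apply, Pi.smul_apply, smul_eq_mul]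
      linarith
    · have h1 := mul_lt_mul_of_pos_left (hx1 i).2 hs
      have h2 := mul_lt_mul_of_pos_left (hy1 i).2 ht
      have h3 : s * (π / 2) + t * (π / 2) = π / 2 := by rw [← add_mul, hst, one_mul]
      simp only [Pi.add_apply, Pi.smul_apply, smul_eq_mul]
      linarith
    · have h1 := mul_lt_mul_of_pos_left (hx2 i hi) hs
      have h2 := mul_lt_mul_of_pos_left (hy2 i hi) ht
      simp only [Pi.add_apply, Pi.smul_apply, smul_eq_mul]
      linarith
    · have hx' := abs_lt.1 (hx3 i hi)
      have hy' := abs_lt.1 (hy3 i hi)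
      have h1 := mul_lt_mul_of_pos_left hx'.1 hs
      have h2 := mul_lt_mul_of_pos_left hy'.1 ht
      have h3 := mul_lt_mul_of_pos_left hx'.2 hs
      have h4 := mul_lt_mul_of_pos_left hy'.2 ht
      simp only [Pi.add_apply, Pi.smul_apply, smul_eq_mul]
      rw [abs_lt]
      constructor <;> linarith
  · refine (Metric.isBounded_Icc (0 : ZMod m → ℝ) (fun _ => π / 2)).subset ?_
    intro w hw
    exact ⟨fun i => (hw.1 i).1.le, fun i => (hw.1 i).2.le⟩
end

section
/- For all real x, y, z with x ≥ 0, y ≥ 0, z ≥ 0 and x + y + z = π, one has 𝒱(x, y, z) ≤ 𝒱(π/3, π/3, π/3). That is, among ideal hyperbolic tetrahedra, the regular ideal tetrahedron (all dihedral angles π/3) has maximal volume v₃ = 𝒱(π/3, π/3, π/3) = −3·∫₀^{π/3} log(2 sin u) du. -/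
open Real intervalIntegral MeasureTheory in
theorem ii_aux (a b : ℝ) : IntervalIntegrable (fun u => Real.log (2 * Real.sin u)) volume a b := by
  have h : IntervalIntegrable (fun u => Real.log 2 + Real.log (Real.sin u)) volume a b :=
    intervalIntegrable_const.add intervalIntegrable_log_sin
  refine h.congr_ae ?_
  refine MeasureTheory.ae_restrict_of_ae ?_
  have hc : {u : ℝ | Real.sin u = 0}.Countable := by
    have : {u : ℝ | Real.sin u = 0} = Set.range (fun n : ℤ => (n : ℝ) * π) := by
      ext u; simp [Real.sin_eq_zero_iff]
    rw [this]; exact Set.countable_range _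
  filter_upwards [hc.ae_notMem volume] with u hu
  rw [Real.log_mul (by norm_num) hu]

theorem lob_sub_aux (a b : ℝ) : lob b - lob a = ∫ u in a..b, Real.log (2 * Real.sin u) := by
  unfold lob
  exact intervalIntegral.integral_interval_sub_left (ii_aux _ _) (ii_aux _ _)

open Real in
theorem sin_ge_aux (u : ℝ) (h1 : π / 3 ≤ u) (h2 : u ≤ 2 * π / 3) : sin (π / 3) ≤ sin u := by
  have hp := pi_pos
  rcases le_total u (π / 2) with h | h
  · exact sin_le_sin_of_le_of_le_pi_div_two (by linarith) h h1
  · rw [← sin_pi_sub u]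
    exact sin_le_sin_of_le_of_le_pi_div_two (by linarith) (by linarith) (by linarith)

open Real in
theorem tangent_aux (x : ℝ) (h0 : 0 ≤ x) (h1 : x ≤ 2 * π / 3) :
    lob (π / 3) + (x - π / 3) * log (2 * sin (π / 3)) ≤ lob x := by
  have hp := pi_pos
  have h3 : 0 < sin (π / 3) := sin_pos_of_pos_of_lt_pi (by linarith) (by linarith)
  rcases le_total (π / 3) x with h | h
  · have := lob_sub_aux (π / 3) x
    have h2 : ∫ u in (π / 3)..x, log (2 * sin (π / 3)) ≤ ∫ u in (π / 3)..x, log (2 * sin u) := by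
      apply intervalIntegral.integral_mono_on_of_le_Ioo h intervalIntegrable_const (ii_aux _ _)
      intro u hu
      have := sin_ge_aux u hu.1.le (by linarith [hu.2])
      exact log_le_log (by positivity) (by linarith)
    rw [intervalIntegral.integral_const, smul_eq_mul] at h2
    linarith
  · have := lob_sub_aux x (π / 3)
    have h2 : ∫ u in x..(π / 3), log (2 * sin u) ≤ ∫ u in x..(π / 3), log (2 * sin (π / 3)) := by
      apply intervalIntegral.integral_mono_on_of_le_Ioo h (ii_aux _ _) intervalIntegrable_const
      intro u hu
      have h4 : 0 < sin u := sin_pos_of_pos_of_lt_pi (by linarith [hu.1]) (by linarith [hu.2])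
      have := sin_le_sin_of_le_of_le_pi_div_two (x := u) (y := π / 3)
        (by linarith [hu.1]) (by linarith) hu.2.le
      exact log_le_log (by positivity) (by linarith)
    rw [intervalIntegral.integral_const, smul_eq_mul] at h2
    linarith

open Real in
theorem small_aux (x y z : ℝ) (hx : 0 ≤ x) (hy : 0 ≤ y) (hz : 0 ≤ z) (h : x + y + z = π)
    (hx' : x ≤ 2 * π / 3) (hy' : y ≤ 2 * π / 3) (hz' : z ≤ 2 * π / 3) :
    3 * lob (π / 3) ≤ lob x + lob y + lob z := by
  have h1 := tangent_aux x hx hx'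
  have h2 := tangent_aux y hy hy'
  have h3 := tangent_aux z hz hz'
  have : z = π - x - y := by linarith
  subst this
  linarith

open Real in
theorem big_aux (x y z : ℝ) (hy : 0 ≤ y) (hz : 0 ≤ z) (h : x + y + z = π)
    (hx' : 2 * π / 3 ≤ x) :
    3 * lob (π / 3) ≤ lob x + lob y + lob z := by
  have hp := pi_pos
  have h1 := small_aux (2 * π / 3) y (z + x - 2 * π / 3) (by linarith) hy (by linarith)
    (by linarith) le_rfl (by linarith) (by linarith)
  have h2 := lob_sub_aux (2 * π / 3) x
  have h3 := lob_sub_aux z (z + x - 2 * π / 3)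
  have h4 : ∫ u in (2 * π / 3)..x, log (2 * sin (z + x - u))
      = ∫ u in z..(z + x - 2 * π / 3), log (2 * sin u) := by
    rw [intervalIntegral.integral_comp_sub_left (fun u => log (2 * sin u))]
    simp
  have h5 : ∫ u in (2 * π / 3)..x, log (2 * sin (z + x - u))
      ≤ ∫ u in (2 * π / 3)..x, log (2 * sin u) := by
    apply intervalIntegral.integral_mono_on_of_le_Ioo hx' _ (ii_aux _ _)
    · intro u hu
      have h6 : 0 < sin (z + x - u) :=
        sin_pos_of_pos_of_lt_pi (by linarith [hu.2]) (by linarith [hu.1])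
      have := sin_le_sin_of_le_of_le_pi_div_two (x := z + x - u) (y := π - u)
        (by linarith [hu.2]) (by linarith [hu.1]) (by linarith)
      rw [sin_pi_sub] at this
      exact log_le_log (by positivity) (by linarith)
    · have := (ii_aux (z + x - 2 * π / 3) z).comp_sub_left (z + x)
      simpa using this
  linarith

/-- Among ideal hyperbolic tetrahedra, the regular ideal tetrahedron (all dihedral
angles `π/3`) has maximal volume `v₃ = −3 ∫₀^{π/3} log(2 sin u) du`. -/
theorem regular_ideal_tetrahedron_maximal_volume :
    (∀ x y z : ℝ, 0 ≤ x → 0 ≤ y → 0 ≤ z → x + y + z = Real.pi →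
      idealVol (x, y, z) ≤ idealVol (Real.pi / 3, Real.pi / 3, Real.pi / 3)) ∧
    idealVol (Real.pi / 3, Real.pi / 3, Real.pi / 3) =
      -(3 * ∫ u in (0:ℝ)..(Real.pi / 3), Real.log (2 * Real.sin u)) := by
  constructor
  · intro x y z hx hy hz h
    have key : 3 * lob (Real.pi / 3) ≤ lob x + lob y + lob z := by
      rcases le_total (2 * Real.pi / 3) x with h1 | h1
      · exact big_aux x y z hy hz h h1
      rcases le_total (2 * Real.pi / 3) y with h2 | h2
      · linarith [big_aux y x z hx hz (by linarith) h2]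
      rcases le_total (2 * Real.pi / 3) z with h3 | h3
      · linarith [big_aux z x y hx hy (by linarith) h3]
      exact small_aux x y z hx hy hz h h1 h2 h3
    simp only [idealVol]
    linarith
  · simp only [idealVol, lob]
    ring
end

section
/- Fix c ≥ 2 and a word ω : Fin c → Bool (the letters of an alternating two-bridge braid word), and call an interior index i ∈ {1, …, c−1} a hinge index iff ω(i−1) ≠ ω(i) (letters indexed from 0). Suppose there exists at least one hinge index. Then there exists w : Fin (c+1) → ℝ with w(0) = w(c) = π/2 such that for every interior index i ∈ {1, …, c−1}: (range) 0 < w(i) < π/2; (concavity) w(i−1) + w(i+1) < 2·w(i) if i is not a hinge index; (hinge) |w(i+1) − w(i−1)| < w(i) if i is a hinge index. -/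
open Real

lemma aux_profile (c h : ℕ) (h0 : 1 ≤ h) (hc : h + 1 ≤ c) : ∃ W : ℕ → ℝ, W 0 = 1 ∧ W c = 1 ∧
    (∀ i, 1 ≤ i → i + 1 ≤ c → W i < 1) ∧ (∀ i, i ≤ c → 3 / 4 ≤ W i ∧ W i ≤ 1) ∧
    (∀ i, 1 ≤ i → i + 1 ≤ c → i ≠ h → W (i - 1) + W (i + 1) < 2 * W i) := by
  have hh : (0 : ℝ) < h := by exact_mod_cast h0
  have hd : (0 : ℝ) < (c : ℝ) - h := by
    have : (h : ℝ) + 1 ≤ c := by exact_mod_cast hc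
    linarith
  have hl : ∀ i : ℕ, i ≤ h → (if i ≤ h then 1 - ((i : ℝ) / h) ^ 2 / 4
      else 1 - (((c : ℝ) - i) / (c - h)) ^ 2 / 4) = 1 - ((i : ℝ) / h) ^ 2 / 4 := by
    intro i hi
    rw [if_pos hi]
  have hr : ∀ i : ℕ, h ≤ i → (if i ≤ h then 1 - ((i : ℝ) / h) ^ 2 / 4
      else 1 - (((c : ℝ) - i) / (c - h)) ^ 2 / 4) = 1 - (((c : ℝ) - i) / (c - h)) ^ 2 / 4 := by
    intro i hi
    split_ifs with h2
    · obtain rfl : i = h := le_antisymm h2 hi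
      rw [div_self hh.ne', div_self hd.ne']
    · rfl
  refine ⟨fun i => if i ≤ h then 1 - ((i : ℝ) / h) ^ 2 / 4
      else 1 - (((c : ℝ) - i) / (c - h)) ^ 2 / 4, ?_, ?_, ?_, ?_, ?_⟩
  · simp
  · simp only [hr c (by omega)]
    simp
  · intro i h1 h2
    have i1 : (1 : ℝ) ≤ i := by exact_mod_cast h1
    have i2 : (i : ℝ) + 1 ≤ c := by exact_mod_cast h2
    rcases le_total i h with hi | hi
    · simp only [hl i hi]
      have : 0 < (i : ℝ) / h := by positivity
      nlinarith [pow_pos this 2]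
    · simp only [hr i hi]
      have : 0 < ((c : ℝ) - i) / (c - h) := div_pos (by linarith) hd
      nlinarith [pow_pos this 2]
  · intro i h2
    have i2 : (i : ℝ) ≤ c := by exact_mod_cast h2
    rcases le_total i h with hi | hi
    · simp only [hl i hi]
      have i3 : (i : ℝ) ≤ h := by exact_mod_cast hi
      have a : 0 ≤ (i : ℝ) / h := by positivity
      have b : (i : ℝ) / h ≤ 1 := (div_le_one hh).2 i3
      constructor <;> nlinarith
    · simp only [hr i hi]
      have i3 : (h : ℝ) ≤ i := by exact_mod_cast hi
      have a : 0 ≤ ((c : ℝ) - i) / (c - h) := div_nonneg (by linarith) hd.le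
      have b : ((c : ℝ) - i) / (c - h) ≤ 1 := (div_le_one hd).2 (by linarith)
      constructor <;> nlinarith
  · intro i h1 h2 hne
    obtain ⟨j, rfl⟩ : ∃ j, i = j + 1 := ⟨i - 1, by omega⟩
    rcases lt_or_gt_of_ne hne with hi | hi
    · simp only [Nat.add_sub_cancel, hl j (by omega), hl (j + 1) (by omega),
        hl (j + 1 + 1) (by omega)]
      push_cast
      have : 0 < (h : ℝ)⁻¹ := by positivity
      simp only [div_eq_mul_inv _ (h : ℝ)]
      nlinarith [pow_pos this 2]
    · simp only [Nat.add_sub_cancel, hr j (by omega), hr (j + 1) (by omega),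
        hr (j + 1 + 1) (by omega)]
      push_cast
      have : 0 < ((c : ℝ) - h)⁻¹ := inv_pos.2 hd
      simp only [div_eq_mul_inv _ ((c : ℝ) - h)]
      nlinarith [pow_pos this 2]

/-- Nonemptiness of the space of angle structures for the monodromy triangulation of a
two-bridge link complement: given a braid word `ω` of length `c ≥ 2` with at least one
hinge, there are parameters `w(0), …, w(c)` with boundary values `π/2` satisfying the
range, concavity and hinge conditions at all interior indices. -/
theorem two_bridge_angle_structure_exists (c : ℕ) (hc : 2 ≤ c) (ω : Fin c → Bool)
    (hhinge : ∃ i : ℕ, ∃ h1 : 1 ≤ i, ∃ h2 : i ≤ c - 1,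
      ω ⟨i - 1, by omega⟩ ≠ ω ⟨i, by omega⟩) :
    ∃ w : Fin (c + 1) → ℝ,
      w ⟨0, by omega⟩ = π / 2 ∧ w ⟨c, by omega⟩ = π / 2 ∧
      ∀ i : ℕ, ∀ h1 : 1 ≤ i, ∀ h2 : i ≤ c - 1,
        (0 < w ⟨i, by omega⟩ ∧ w ⟨i, by omega⟩ < π / 2) ∧
        (ω ⟨i - 1, by omega⟩ = ω ⟨i, by omega⟩ →
          w ⟨i - 1, by omega⟩ + w ⟨i + 1, by omega⟩ < 2 * w ⟨i, by omega⟩) ∧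
        (ω ⟨i - 1, by omega⟩ ≠ ω ⟨i, by omega⟩ →
          |w ⟨i + 1, by omega⟩ - w ⟨i - 1, by omega⟩| < w ⟨i, by omega⟩) := by
  obtain ⟨h, a1, a2, hne⟩ := hhinge
  obtain ⟨W, W0, Wc, Wlt, Wb, Wcc⟩ := aux_profile c h a1 (by omega)
  have hp := Real.pi_pos
  refine ⟨fun i => π / 2 * W i, by simp [W0], by simp [Wc], ?_⟩
  intro i h1 h2
  dsimp only
  have b0 := Wb i (by omega)
  have b1 := Wb (i - 1) (by omega)
  have b2 := Wb (i + 1) (by omega)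
  have l := Wlt i h1 (by omega)
  refine ⟨⟨by nlinarith, by nlinarith⟩, fun he => ?_, fun _ => ?_⟩
  · have hi : i ≠ h := by
      rintro rfl
      exact hne he
    nlinarith [Wcc i h1 (by omega) hi]
  · rw [abs_lt]
    constructor <;> nlinarith
end
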